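/- Let (ψ(q))_{q≥1} be a non-increasing sequence of positive real numbers such that ∑_{q=1}^{∞} ψ(q) diverges. Then for Lebesgue-almost every ω ∈ ℝ, there are infinitely many odd positive integers q for which there exists an integer p with gcd(p, q) = 1 and |q·ω − p| < ψ(q). -/

import Mathlib

open MeasureTheory

open Filter Finset Asymptotics Metric
open scoped Nat Topology

/-!
On `ℝ / ℤ` the reduced fractions with denominator `q` are the points of order `q`, so by
Gallagher's zero-one law it suffices to approximate a set of points of positive measure.

Two distinct points of order at most `N` are at distance at least `N⁻²`, and `∑ q ≤ N, φ q` of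
them have an admissible order `q`; when this sum has order `N²`, they are spread as evenly as
possible. The neighbourhoods `E j` and `E k` of the points of order at most `2 ^ j` and at most
`2 ^ k`, with `j ≤ k`, are then quasi-independent: `E j ∩ E k` has measure
`≪ |E k| * (|E j| + 4⁻¹ ^ (k - j))`. By Cauchy condensation `∑ |E k|` diverges, and the second
moment method bounds the measure of `limsup E` from below.

That odd denominators suffice follows by summing `n = ∑ d ∣ n, φ d` over the odd `n ≤ N`: the
terms with `d ≤ N / 4` account for at most half of the left-hand side, up to `O(N)`.
-/

section SecondMoment

variable {α : Type*} [MeasurableSpace α] {μ : Measure α}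

theorem sq_sum_measureReal_le_measureReal_biUnion_mul [IsFiniteMeasure μ] {ι : Type*}
    {E : ι → Set α} (I : Finset ι) (hE : ∀ i, MeasurableSet (E i)) :
    (∑ i ∈ I, μ.real (E i)) ^ 2 ≤
      μ.real (⋃ i ∈ I, E i) * ∑ i ∈ I, ∑ j ∈ I, μ.real (E i ∩ E j) := by
  have hU : MeasurableSet (⋃ i ∈ I, E i) := I.measurableSet_biUnion fun i _ ↦ hE i
  have hinter : ∀ i ∈ I, (⋃ i ∈ I, E i) ∩ E i = E i := fun i hi ↦
    Set.inter_eq_right.2 (Set.subset_biUnion_of_mem (u := E) hi)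
  -- Cauchy–Schwarz in `L²` for the indicator of the union and the counting function `∑ 𝟙_{E i}`.
  have hCS := real_inner_mul_inner_self_le
    (indicatorConstLp 2 hU (measure_ne_top μ _) (1 : ℝ))
    (∑ i ∈ I, indicatorConstLp 2 (hE i) (measure_ne_top μ _) (1 : ℝ))
  simp only [sum_inner, inner_sum, L2.real_inner_indicatorConstLp_one_indicatorConstLp_one,
    Set.inter_self, sum_congr rfl fun i hi ↦ congrArg μ.real (hinter i hi)] at hCS
  rwa [sq, sum_comm (f := fun i j ↦ μ.real (E i ∩ E j))]

theorem sum_sum_le_two_mul_sum_sum_le {ι : Type*} [LinearOrder ι] (s : Finset ι) {f : ι → ι → ℝ}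
    (hf : ∀ i j, 0 ≤ f i j) (hsymm : ∀ i j, f i j = f j i) :
    ∑ i ∈ s, ∑ j ∈ s, f j i ≤ 2 * ∑ i ∈ s, ∑ j ∈ s with j ≤ i, f j i := by
  have hswap : ∑ i ∈ s, ∑ j ∈ s with j ≤ i, f j i = ∑ i ∈ s, ∑ j ∈ s with i ≤ j, f j i := by
    simp only [sum_filter]
    rw [sum_comm]
    simp only [hsymm]
  rw [two_mul]
  nth_rw 2 [hswap]
  simp only [sum_filter, ← sum_add_distrib]
  gcongr with i _ j _
  rcases le_total j i with h | h <;> simp only [h, if_true] <;> split_ifs <;> linarith [hf j i]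

theorem sum_filter_le_pow_sub_le {a : ℝ} (ha₀ : 0 ≤ a) (ha₁ : a < 1) (s : Finset ℕ) (k : ℕ) :
    ∑ j ∈ s with j ≤ k, a ^ (k - j) ≤ (1 - a)⁻¹ :=
  calc ∑ j ∈ s with j ≤ k, a ^ (k - j)
    _ ≤ ∑ j ∈ range (k + 1), a ^ (k - j) :=
      sum_le_sum_of_subset_of_nonneg
        (fun j hj ↦ mem_range_succ_iff.2 (mem_filter.1 hj).2) fun _ _ _ ↦ by positivity
    _ = ∑ i ∈ range (k + 1), a ^ i := sum_flip (a ^ ·)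
    _ ≤ ∑' i, a ^ i := (summable_geometric_of_lt_one ha₀ ha₁).sum_le_tsum _ fun _ _ ↦ by positivity
    _ = (1 - a)⁻¹ := tsum_geometric_of_lt_one ha₀ ha₁

variable {E : ℕ → Set α} {C a : ℝ}

theorem sum_sum_measureReal_inter_le (hC : 0 ≤ C) (ha₀ : 0 ≤ a) (ha₁ : a < 1) (I : Finset ℕ)
    (hpair : ∀ k ∈ I, ∀ j ≤ k,
      μ.real (E j ∩ E k) ≤ C * μ.real (E k) * (μ.real (E j) + a ^ (k - j))) :
    ∑ k ∈ I, ∑ j ∈ I, μ.real (E j ∩ E k) ≤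
      2 * C * (∑ k ∈ I, μ.real (E k)) * (∑ k ∈ I, μ.real (E k) + (1 - a)⁻¹) := by
  have hrow : ∀ k ∈ I, ∑ j ∈ I with j ≤ k, μ.real (E j ∩ E k) ≤
      C * μ.real (E k) * (∑ j ∈ I, μ.real (E j) + (1 - a)⁻¹) := fun k hk ↦
    calc ∑ j ∈ I with j ≤ k, μ.real (E j ∩ E k)
      _ ≤ ∑ j ∈ I with j ≤ k, C * μ.real (E k) * (μ.real (E j) + a ^ (k - j)) :=
        sum_le_sum fun j hj ↦ hpair k hk j (mem_filter.1 hj).2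
      _ = C * μ.real (E k) * (∑ j ∈ I with j ≤ k, μ.real (E j) +
          ∑ j ∈ I with j ≤ k, a ^ (k - j)) := by rw [← mul_sum, sum_add_distrib]
      _ ≤ C * μ.real (E k) * (∑ j ∈ I, μ.real (E j) + (1 - a)⁻¹) := by
        gcongr
        · exact filter_subset _ _
        · exact sum_filter_le_pow_sub_le ha₀ ha₁ I k
  calc ∑ k ∈ I, ∑ j ∈ I, μ.real (E j ∩ E k)
    _ ≤ 2 * ∑ k ∈ I, ∑ j ∈ I with j ≤ k, μ.real (E j ∩ E k) :=
      sum_sum_le_two_mul_sum_sum_le I (fun _ _ ↦ measureReal_nonneg)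
        fun i j ↦ by rw [Set.inter_comm]
    _ ≤ 2 * ∑ k ∈ I, C * μ.real (E k) * (∑ j ∈ I, μ.real (E j) + (1 - a)⁻¹) := by
      gcongr with k hk
      exact hrow k hk
    _ = _ := by rw [← sum_mul, ← mul_sum]; ring

variable [IsFiniteMeasure μ]

theorem one_le_measureReal_biUnion_mul (hE : ∀ k, MeasurableSet (E k)) (hC : 0 ≤ C)
    (ha₀ : 0 ≤ a) (ha₁ : a < 1) {I : Finset ℕ} (hI : 1 ≤ ∑ k ∈ I, μ.real (E k))
    (hpair : ∀ k ∈ I, ∀ j ≤ k,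
      μ.real (E j ∩ E k) ≤ C * μ.real (E k) * (μ.real (E j) + a ^ (k - j))) :
    1 ≤ μ.real (⋃ k ∈ I, E k) * (2 * C * (1 + (1 - a)⁻¹)) := by
  set S := ∑ k ∈ I, μ.real (E k)
  have ha : 0 < (1 - a)⁻¹ := inv_pos.2 (sub_pos.2 ha₁)
  have hsq : S ^ 2 * 1 ≤ S ^ 2 * (μ.real (⋃ k ∈ I, E k) * (2 * C * (1 + (1 - a)⁻¹))) :=
    calc S ^ 2 * 1
      _ ≤ μ.real (⋃ k ∈ I, E k) * ∑ k ∈ I, ∑ j ∈ I, μ.real (E j ∩ E k) := by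
        simpa only [mul_one, Set.inter_comm] using
          sq_sum_measureReal_le_measureReal_biUnion_mul (μ := μ) I hE
      _ ≤ μ.real (⋃ k ∈ I, E k) * (2 * C * S * (S + (1 - a)⁻¹)) := by
        gcongr
        exact sum_sum_measureReal_inter_le hC ha₀ ha₁ I hpair
      _ ≤ μ.real (⋃ k ∈ I, E k) * (2 * C * S * (S + S * (1 - a)⁻¹)) := by
        gcongr
        exact le_mul_of_one_le_left ha.le hI
      _ = S ^ 2 * (μ.real (⋃ k ∈ I, E k) * (2 * C * (1 + (1 - a)⁻¹))) := by ring
  exact le_of_mul_le_mul_left hsq (by positivity)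

theorem tendsto_measureReal_iUnion_ge_limsup (hE : ∀ k, MeasurableSet (E k)) :
    Tendsto (fun m ↦ μ.real (⋃ k ≥ m, E k)) atTop (𝓝 (μ.real (limsup E atTop))) := by
  rw [limsup_eq_iInf_iSup_of_nat]
  refine (ENNReal.tendsto_toReal (measure_ne_top μ _)).comp <| tendsto_measure_iInter_atTop
    (fun m ↦ (MeasurableSet.iUnion fun k ↦ .iUnion fun _ ↦ hE k).nullMeasurableSet)
    (fun m n hmn ↦ Set.biUnion_subset_biUnion_left fun k hk ↦ hmn.trans hk)
    ⟨0, measure_ne_top μ _⟩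

theorem measure_limsup_ne_zero_of_measureReal_inter_le (hE : ∀ k, MeasurableSet (E k))
    (hdiv : ¬ Summable fun k ↦ μ.real (E k)) (hC : 0 ≤ C) (ha₀ : 0 ≤ a) (ha₁ : a < 1)
    (hpair : ∀ᶠ k in atTop, ∀ j ≤ k,
      μ.real (E j ∩ E k) ≤ C * μ.real (E k) * (μ.real (E j) + a ^ (k - j))) :
    μ (limsup E atTop) ≠ 0 := by
  have : 0 < (1 - a)⁻¹ := inv_pos.2 (sub_pos.2 ha₁)
  have htail : ∀ᶠ m in atTop, 1 ≤ μ.real (⋃ k ≥ m, E k) * (2 * C * (1 + (1 - a)⁻¹)) := by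
    filter_upwards [eventually_forall_ge_atTop.2 hpair] with m hm
    have hsums := (not_summable_iff_tendsto_nat_atTop_of_nonneg fun _ ↦ measureReal_nonneg).1 hdiv
    obtain ⟨n, hn, hmn⟩ := ((hsums.eventually_ge_atTop (1 + ∑ k ∈ range m, μ.real (E k))).and
      (eventually_ge_atTop m)).exists
    have hI : 1 ≤ ∑ k ∈ Ico m n, μ.real (E k) := by rw [sum_Ico_eq_sub _ hmn]; linarith
    have hsub : ⋃ k ∈ Ico m n, E k ⊆ ⋃ k ≥ m, E k :=
      Set.biUnion_subset_biUnion_left fun k hk ↦ (mem_Ico.1 hk).1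
    refine (one_le_measureReal_biUnion_mul hE hC ha₀ ha₁ hI fun k hk ↦
      hm k (mem_Ico.1 hk).1).trans ?_
    gcongr
    exact measure_ne_top μ _
  have hone := ge_of_tendsto
    ((tendsto_measureReal_iUnion_ge_limsup (μ := μ) hE).mul_const _) htail
  intro hzero
  rw [measureReal_def, hzero, ENNReal.toReal_zero, zero_mul] at hone
  exact one_pos.not_ge hone

end SecondMoment

section Separated

theorem pairwiseDisjoint_ball_of_le_dist {X : Type*} [PseudoMetricSpace X] {s : Set X} {δ r : ℝ}
    (hs : s.Pairwise fun x y ↦ δ ≤ dist x y) (hr : 2 * r ≤ δ) :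
    s.PairwiseDisjoint fun x ↦ ball x r := fun x hx y hy hxy ↦
  ball_disjoint_ball (by linarith [hs hx hy hxy])

variable {T : ℝ} [hT : Fact (0 < T)] {A B : Finset (AddCircle T)} {δ r ρ : ℝ}

theorem measureReal_ball_addCircle (x : AddCircle T) (hr : 0 ≤ r) :
    volume.real (ball x r) = min T (2 * r) := by
  have : 0 ≤ min T (2 * r) := le_min hT.out.le (by positivity)
  rw [← measureReal_congr AddCircle.closedBall_ae_eq_ball, measureReal_def,
    AddCircle.volume_closedBall, ENNReal.toReal_ofReal this]

theorem measureReal_thickening_of_le_dist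
    (hA : (A : Set (AddCircle T)).Pairwise fun x y ↦ δ ≤ dist x y) (hδT : δ ≤ T) (hr₀ : 0 ≤ r)
    (hr : 2 * r ≤ δ) :
    volume.real (thickening r (A : Set (AddCircle T))) = #A * (2 * r) := by
  simp only [thickening_eq_biUnion_ball, mem_coe]
  rw [measureReal_biUnion_finset (pairwiseDisjoint_ball_of_le_dist hA hr)
    fun _ _ ↦ measurableSet_ball]
  simp only [measureReal_ball_addCircle _ hr₀, min_eq_right (hr.trans hδT), sum_const, nsmul_eq_mul]

theorem card_mul_le_of_le_dist
    (hA : (A : Set (AddCircle T)).Pairwise fun x y ↦ δ ≤ dist x y) (hδT : δ ≤ T) (hδ : 0 ≤ δ) :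
    #A * δ ≤ T :=
  calc #A * δ
    _ = volume.real (thickening (δ / 2) (A : Set (AddCircle T))) := by
      rw [measureReal_thickening_of_le_dist hA hδT (by positivity) (by linarith)]; ring
    _ ≤ volume.real (Set.univ : Set (AddCircle T)) := measureReal_mono (Set.subset_univ _)
    _ = T := by rw [measureReal_def, AddCircle.measure_univ, ENNReal.toReal_ofReal hT.out.le]

theorem card_mul_le_of_le_dist_of_dist_lt
    (hA : (A : Set (AddCircle T)).Pairwise fun x y ↦ δ ≤ dist x y) (hδT : δ ≤ T) (hδ : 0 ≤ δ)
    (hρ : 0 ≤ ρ) {g : AddCircle T} (hg : ∀ x ∈ A, dist x g < ρ) :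
    #A * δ ≤ 2 * ρ + δ :=
  calc #A * δ
    _ = volume.real (thickening (δ / 2) (A : Set (AddCircle T))) := by
      rw [measureReal_thickening_of_le_dist hA hδT (by positivity) (by linarith)]; ring
    _ ≤ volume.real (ball g (ρ + δ / 2)) := by
      refine measureReal_mono fun z hz ↦ ?_
      obtain ⟨x, hx, hzx⟩ := mem_thickening_iff.1 hz
      exact mem_ball.2 (by linarith [dist_triangle z x g, hg x hx])
    _ ≤ 2 * ρ + δ := by
      rw [measureReal_ball_addCircle g (by positivity)]
      exact (min_le_right _ _).trans_eq (by ring)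

theorem measureReal_thickening_inter_le_of_le_dist
    (hB : (B : Set (AddCircle T)).Pairwise fun x y ↦ δ ≤ dist x y) (hδT : δ ≤ T) (hδ : 0 < δ)
    (hρ : 0 ≤ ρ) (hr₀ : 0 ≤ r) (hr : 2 * r ≤ δ) :
    volume.real (thickening ρ (A : Set (AddCircle T)) ∩ thickening r (B : Set (AddCircle T))) ≤
      #A * ((2 * ρ / δ + 2) * (2 * r)) := by
  classical
  let near (g : AddCircle T) : Finset (AddCircle T) := {x ∈ B | dist x g < ρ + r}
  have hcover : thickening ρ (A : Set (AddCircle T)) ∩ thickening r (B : Set (AddCircle T)) ⊆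
      ⋃ g ∈ A, ⋃ x ∈ near g, ball x r := by
    rintro z ⟨hzA, hzB⟩
    obtain ⟨g, hg, hzg⟩ := mem_thickening_iff.1 hzA
    obtain ⟨x, hx, hzx⟩ := mem_thickening_iff.1 hzB
    have hxg : dist x g < ρ + r := by linarith [dist_triangle_left x g z]
    exact Set.mem_biUnion hg (Set.mem_biUnion (mem_filter.2 ⟨hx, hxg⟩) hzx)
  have hnear : ∀ g, (#(near g) : ℝ) ≤ 2 * ρ / δ + 2 := fun g ↦ by
    have hcard := card_mul_le_of_le_dist_of_dist_lt (g := g) (ρ := ρ + r)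
      (hB.mono (coe_subset.2 (filter_subset (dist · g < ρ + r) B))) hδT hδ.le (by positivity)
      fun x hx ↦ (mem_filter.1 hx).2
    rw [div_add' _ _ _ hδ.ne', le_div_iff₀ hδ]
    linarith
  calc volume.real (thickening ρ (A : Set (AddCircle T)) ∩ thickening r (B : Set (AddCircle T)))
    _ ≤ volume.real (⋃ g ∈ A, ⋃ x ∈ near g, ball x r) := 
      measureReal_mono hcover (measure_ne_top _ _)
    _ ≤ ∑ g ∈ A, ∑ x ∈ near g, volume.real (ball x r) :=
      (measureReal_biUnion_finset_le _ _).trans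
        (sum_le_sum fun g _ ↦ measureReal_biUnion_finset_le _ _)
    _ ≤ ∑ g ∈ A, (2 * ρ / δ + 2) * (2 * r) := by
      refine sum_le_sum fun g _ ↦ (sum_le_card_nsmul _ _ (2 * r) fun x _ ↦ ?_).trans ?_
      · exact (measureReal_ball_addCircle x hr₀).trans_le (min_le_right _ _)
      · rw [nsmul_eq_mul]
        gcongr
        exact hnear g
    _ = #A * ((2 * ρ / δ + 2) * (2 * r)) := by rw [sum_const, nsmul_eq_mul]

end Separated

section LimsupThickening

variable {A : ℕ → Finset UnitAddCircle} {a C : ℝ} {r : ℕ → ℝ}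

theorem measureReal_thickening_inter_le_of_inv_pow_le_mul_card (ha₀ : 0 < a) (ha₁ : a < 1)
    (hsep : ∀ k, (A k : Set UnitAddCircle).Pairwise fun x y ↦ a ^ k ≤ dist x y)
    (hr₀ : ∀ k, 0 ≤ r k) (hr : ∀ k, 2 * r k ≤ a ^ k) {j k : ℕ} (hjk : j ≤ k)
    (hk : (a ^ k)⁻¹ ≤ C * #(A k)) :
    volume.real (thickening (r j) (A j : Set UnitAddCircle) ∩ thickening (r k) (A k)) ≤
      2 * C * (#(A k) * (2 * r k)) * (#(A j) * (2 * r j) + a ^ (k - j)) := by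
  have ha : ∀ k, a ^ k ≤ 1 := fun k ↦ pow_le_one₀ ha₀.le ha₁.le
  have hj : (#(A j) : ℝ) ≤ (a ^ j)⁻¹ := by
    rw [← one_div, le_div_iff₀ (by positivity)]
    exact card_mul_le_of_le_dist (hsep j) (ha j) (by positivity)
  have hrj := hr₀ j
  have hrk := hr₀ k
  have hCk : 0 ≤ C * #(A k) := (inv_pos.2 (pow_pos ha₀ k)).le.trans hk
  calc volume.real (thickening (r j) (A j : Set UnitAddCircle) ∩ thickening (r k) (A k))
    _ ≤ #(A j) * ((2 * r j / a ^ k + 2) * (2 * r k)) :=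
      measureReal_thickening_inter_le_of_le_dist (hsep k) (ha k) (by positivity) hrj hrk (hr k)
    _ = (a ^ k)⁻¹ * (2 * r k) * (#(A j) * (2 * r j) + #(A j) * (2 * a ^ k)) := by
      field_simp
    _ ≤ C * #(A k) * (2 * r k) * (#(A j) * (2 * r j) + (a ^ j)⁻¹ * (2 * a ^ k)) := by
      gcongr
    _ ≤ C * #(A k) * (2 * r k) * (2 * (#(A j) * (2 * r j)) + (a ^ j)⁻¹ * (2 * a ^ k)) := by
      gcongr _ * (?_ + _)
      exact le_mul_of_one_le_left (by positivity) one_le_two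
    _ = 2 * C * (#(A k) * (2 * r k)) * (#(A j) * (2 * r j) + a ^ (k - j)) := by
      rw [pow_sub₀ a ha₀.ne' hjk]; ring

theorem volume_limsup_thickening_ne_zero (ha₀ : 0 < a) (ha₁ : a < 1)
    (hsep : ∀ k, (A k : Set UnitAddCircle).Pairwise fun x y ↦ a ^ k ≤ dist x y)
    (hcard : (fun k ↦ (a ^ k)⁻¹) =O[atTop] fun k ↦ (#(A k) : ℝ))
    (hr₀ : ∀ k, 0 ≤ r k) (hr : ∀ k, 2 * r k ≤ a ^ k) (hdiv : ¬ Summable fun k ↦ (a ^ k)⁻¹ * r k) :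
    volume (limsup (fun k ↦ thickening (r k) (A k : Set UnitAddCircle)) atTop) ≠ 0 := by
  have hvol : ∀ k, volume.real (thickening (r k) (A k : Set UnitAddCircle)) =
      #(A k) * (2 * r k) := fun k ↦
    measureReal_thickening_of_le_dist (hsep k) (pow_le_one₀ ha₀.le ha₁.le) (hr₀ k) (hr k)
  obtain ⟨C, hC, hCcard⟩ := hcard.exists_pos
  refine measure_limsup_ne_zero_of_measureReal_inter_le (C := 2 * C)
    (fun k ↦ isOpen_thickening.measurableSet) ?_ (by positivity) ha₀.le ha₁ ?_
  · refine fun hsum ↦ hdiv (summable_of_isBigO_nat hsum ?_)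
    simp only [hvol]
    refine hcard.mul (.of_bound 1 (.of_forall fun k ↦ ?_))
    rw [Real.norm_of_nonneg (hr₀ k), Real.norm_of_nonneg (by linarith [hr₀ k])]
    linarith [hr₀ k]
  · filter_upwards [hCcard.bound] with k hk j hjk
    rw [Real.norm_of_nonneg (by positivity), Real.norm_natCast] at hk
    rw [hvol, hvol]
    exact measureReal_thickening_inter_le_of_inv_pow_le_mul_card ha₀ ha₁ hsep hr₀ hr hjk hk

end LimsupThickening

section PointsOfOrder

variable {T : ℝ}

theorem finite_setOf_addOrderOf_mem (Q : Finset ℕ) :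
    {x : AddCircle T | 0 < addOrderOf x ∧ addOrderOf x ∈ Q}.Finite := by
  refine (Q.finite_toSet.biUnion' (t := fun q _ ↦ {x : AddCircle T | 0 < q ∧ addOrderOf x = q})
    fun q _ ↦ ?_).subset fun x hx ↦ Set.mem_biUnion hx.2 ⟨hx.1, rfl⟩
  obtain rfl | hq := q.eq_zero_or_pos
  · exact Set.finite_empty.subset fun x hx ↦ hx.1.false
  · exact (AddCircle.finite_setOfPred_addOrderOf_eq T hq).subset fun x hx ↦ hx.2

/-- The points of finite order in `AddCircle T` whose order belongs to `Q`. On `ℝ / ℤ` these are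
the fractions that have a denominator in `Q` in lowest terms. -/
noncomputable def pointsOfOrder (T : ℝ) (Q : Finset ℕ) : Finset (AddCircle T) :=
  (finite_setOf_addOrderOf_mem Q).toFinset

theorem mem_pointsOfOrder {Q : Finset ℕ} {x : AddCircle T} :
    x ∈ pointsOfOrder T Q ↔ 0 < addOrderOf x ∧ addOrderOf x ∈ Q :=
  (finite_setOf_addOrderOf_mem Q).mem_toFinset

variable [Fact (0 < T)]

theorem div_sq_le_dist_of_addOrderOf_le {x y : AddCircle T} {N : ℕ} (hx₀ : 0 < addOrderOf x)
    (hy₀ : 0 < addOrderOf y) (hx : addOrderOf x ≤ N) (hy : addOrderOf y ≤ N) (hxy : x ≠ y) :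
    T / N ^ 2 ≤ dist x y := by
  have hN : 0 < N := hx₀.trans_le hx
  have hdvd : addOrderOf (x - y) ∣ addOrderOf x * addOrderOf y := by
    have h := (AddCommute.all x (-y)).addOrderOf_add_dvd_mul_addOrderOf
    rwa [addOrderOf_neg, ← sub_eq_add_neg] at h
  have hord : addOrderOf (x - y) ≤ N ^ 2 :=
    (Nat.le_of_dvd (by positivity) hdvd).trans (sq N ▸ Nat.mul_le_mul hx hy)
  have hfin : IsOfFinAddOrder (x - y) :=
    addOrderOf_pos_iff.1 (Nat.pos_of_dvd_of_pos hdvd (by positivity))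
  rw [div_le_iff₀' (by positivity), dist_eq_norm]
  calc T
    _ ≤ addOrderOf (x - y) • ‖x - y‖ :=
      AddCircle.le_add_order_smul_norm_of_isOfFinAddOrder hfin (sub_ne_zero.2 hxy)
    _ = (addOrderOf (x - y) : ℝ) * ‖x - y‖ := nsmul_eq_mul _ _
    _ ≤ N ^ 2 * ‖x - y‖ := by gcongr; exact_mod_cast hord

theorem card_filter_pointsOfOrder_addOrderOf_eq {Q : Finset ℕ} {q : ℕ} (hq : q ∈ Q) :
    #{x ∈ pointsOfOrder T Q | addOrderOf x = q} = φ q := by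
  obtain rfl | hpos := q.eq_zero_or_pos
  · rw [Nat.totient_zero, card_eq_zero, filter_eq_empty_iff]
    exact fun x hx ↦ (mem_pointsOfOrder.1 hx).1.ne'
  · rw [← AddCircle.card_addOrderOf_eq_totient (p := T), ← Nat.card_eq_finsetCard]
    refine Nat.card_congr (Equiv.subtypeEquivRight fun x ↦ ?_)
    rw [mem_filter, mem_pointsOfOrder, and_iff_right_iff_imp]
    rintro rfl
    exact ⟨hpos, hq⟩

theorem card_pointsOfOrder (Q : Finset ℕ) : #(pointsOfOrder T Q) = ∑ q ∈ Q, φ q := by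
  rw [card_eq_sum_card_fiberwise fun x hx ↦ (mem_pointsOfOrder.1 hx).2]
  exact sum_congr rfl fun q hq ↦ card_filter_pointsOfOrder_addOrderOf_eq hq

end PointsOfOrder

section TotientSum

variable {p : ℕ → Prop} [DecidablePred p]

theorem eq_sum_ite_dvd_totient (hp : ∀ ⦃d n⦄, d ∣ n → p n → p d) {n N : ℕ}
    (hn : n ∈ {n ∈ Ioc 0 N | p n}) :
    n = ∑ d ∈ Ioc 0 N with p d, if d ∣ n then φ d else 0 := by
  obtain ⟨hnN, hpn⟩ := mem_filter.1 hn
  obtain ⟨hn₀, hnN⟩ := mem_Ioc.1 hnN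
  have hdivisors : n.divisors = {d ∈ {d ∈ Ioc 0 N | p d} | d ∣ n} := by
    ext d
    simp only [Nat.mem_divisors, mem_filter, mem_Ioc]
    exact ⟨fun ⟨hd, _⟩ ↦ ⟨⟨⟨Nat.pos_of_dvd_of_pos hd hn₀, (Nat.le_of_dvd hn₀ hd).trans hnN⟩,
      hp hd hpn⟩, hd⟩, fun ⟨_, hd⟩ ↦ ⟨hd, hn₀.ne'⟩⟩
  rw [← sum_filter, ← hdivisors, Nat.sum_totient]

theorem sum_filter_le_sum_div_mul_totient (hp : ∀ ⦃d n⦄, d ∣ n → p n → p d) (N : ℕ) :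
    ∑ n ∈ Ioc 0 N with p n, n ≤ ∑ d ∈ Ioc 0 N with p d, N / d * φ d :=
  calc ∑ n ∈ Ioc 0 N with p n, n
    _ = ∑ d ∈ Ioc 0 N with p d, ∑ n ∈ Ioc 0 N with p n, if d ∣ n then φ d else 0 := by
      rw [sum_congr rfl fun n ↦ eq_sum_ite_dvd_totient hp, sum_comm]
    _ ≤ ∑ d ∈ Ioc 0 N with p d, N / d * φ d := by
      gcongr with d
      rw [← sum_filter, sum_const, smul_eq_mul, ← Nat.Ioc_filter_dvd_card_eq_div]
      gcongr
      exact filter_subset _ _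

theorem sum_filter_le_mul_card_add_mul_sum_totient (hp : ∀ ⦃d n⦄, d ∣ n → p n → p d) {X N : ℕ}
    (hXN : X ≤ N) :
    ∑ n ∈ Ioc 0 N with p n, n ≤
      N * #{d ∈ Ioc 0 X | p d} + N / (X + 1) * ∑ d ∈ Ioc X N with p d, φ d :=
  calc ∑ n ∈ Ioc 0 N with p n, n
    _ ≤ ∑ d ∈ Ioc 0 N with p d, N / d * φ d := sum_filter_le_sum_div_mul_totient hp N
    _ = ∑ d ∈ Ioc 0 X with p d, N / d * φ d + ∑ d ∈ Ioc X N with p d, N / d * φ d := by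
      rw [← sum_union (disjoint_filter_filter (Ioc_disjoint_Ioc_of_le le_rfl)), ← filter_union,
        Ioc_union_Ioc_eq_Ioc X.zero_le hXN]
    _ ≤ #{d ∈ Ioc 0 X | p d} • N + ∑ d ∈ Ioc X N with p d, N / (X + 1) * φ d := by
      gcongr with d hd
      · refine sum_le_card_nsmul _ _ _ fun d _ ↦ ?_
        exact (Nat.mul_le_mul_left _ d.totient_le).trans (Nat.div_mul_le_self N d)
      · exact (mem_Ioc.1 (mem_filter.1 hd).1).1
    _ = _ := by rw [smul_eq_mul, mul_comm, mul_sum]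

theorem card_Ioc_filter_odd (N : ℕ) : #{n ∈ Ioc 0 N | Odd n} = (N + 1) / 2 := by
  induction N with
  | zero => rfl
  | succ N ih =>
    rw [← insert_Ioc_right_eq_Ioc_add_one N.zero_le, filter_insert]
    split_ifs with hN
    · rw [card_insert_of_notMem (by simp), ih]; grind
    · rw [ih]; grind

theorem sum_Ioc_filter_odd (N : ℕ) : ∑ n ∈ Ioc 0 N with Odd n, n = ((N + 1) / 2) ^ 2 := by
  induction N with
  | zero => rfl
  | succ N ih =>
    rw [sum_filter, sum_Ioc_succ_top N.zero_le, ← sum_filter, ih]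
    obtain ⟨m, rfl | rfl⟩ := N.even_or_odd'
    · rw [if_pos (by simp), show (2 * m + 1) / 2 = m by omega,
        show (2 * m + 1 + 1) / 2 = m + 1 by omega]
      ring
    · rw [if_neg (by grind), add_zero, show (2 * m + 1 + 1 + 1) / 2 = (2 * m + 1 + 1) / 2 by omega]

theorem sq_le_sum_totient_odd {N : ℕ} (hN : 8 ≤ N) :
    N ^ 2 ≤ 48 * ∑ q ∈ Icc 1 N with Odd q, φ q := by
  have hodd : ((N + 1) / 2) ^ 2 ≤ N * ((N / 4 + 1) / 2) +
      N / (N / 4 + 1) * ∑ q ∈ Ioc (N / 4) N with Odd q, φ q := by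
    simpa only [sum_Ioc_filter_odd, card_Ioc_filter_odd] using
      sum_filter_le_mul_card_add_mul_sum_totient (p := Odd) (fun d n hdn hn ↦ hn.of_dvd_nat hdn)
        (Nat.div_le_self N 4)
  have htail : ∑ q ∈ Ioc (N / 4) N with Odd q, φ q ≤ ∑ q ∈ Icc 1 N with Odd q, φ q :=
    sum_le_sum_of_subset (filter_subset_filter _ (Ioc_subset_Ioc_left (Nat.zero_le _)))
  have hquot : N / (N / 4 + 1) ≤ 3 :=
    Nat.lt_succ_iff.1 ((Nat.div_lt_iff_lt_mul (by omega)).2 (by omega))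
  have hmain := hodd.trans (Nat.add_le_add_left (Nat.mul_le_mul hquot htail) _)
  have hhalf : N ≤ 2 * ((N + 1) / 2) := by omega
  have hquarter : 8 * ((N / 4 + 1) / 2) ≤ N + 4 := by omega
  nlinarith

theorem isBigO_sq_sum_totient_odd :
    (fun N : ℕ ↦ (N : ℝ) ^ 2) =O[atTop] fun N ↦ ∑ q ∈ Icc 1 N with Odd q, (φ q : ℝ) := by
  refine .of_bound 48 ?_
  filter_upwards [eventually_ge_atTop 8] with N hN
  rw [Real.norm_of_nonneg (by positivity), Real.norm_of_nonneg (by positivity)]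
  exact_mod_cast sq_le_sum_totient_odd hN

end TotientSum

section Divergence

theorem summable_of_summable_min {ι : Type*} {f : ι → ℝ} {c : ℝ} (hc : 0 < c)
    (hf : Summable fun i ↦ min (f i) c) : Summable f := by
  refine (summable_congr_cofinite ?_).1 hf
  filter_upwards [hf.tendsto_cofinite_zero.eventually_lt_const hc] with i hi
  exact min_eq_left ((min_lt_iff.1 hi).resolve_right (lt_irrefl c)).le

variable {ψ : ℕ → ℝ}

theorem not_summable_of_tendsto_sum_Icc_atTop
    (hψ : Tendsto (fun N ↦ ∑ q ∈ Icc 1 N, ψ q) atTop atTop) : ¬ Summable ψ := by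
  intro hsum
  refine not_tendsto_atTop_of_tendsto_nhds
    (((summable_nat_add_iff 1).2 hsum).tendsto_sum_tsum_nat.congr fun N ↦ ?_) hψ
  rw [range_eq_Ico, sum_Ico_add', zero_add, Ico_add_one_right_eq_Icc]

theorem summable_of_summable_condensed (hnonneg : ∀ q, 1 ≤ q → 0 ≤ ψ q)
    (hanti : AntitoneOn ψ (Set.Ici 1)) (hψ : Summable fun k : ℕ ↦ 2 ^ k * ψ (2 ^ k)) :
    Summable ψ := by
  let f : ℕ → ℝ := Function.update ψ 0 0
  have hf : ∀ q, 1 ≤ q → f q = ψ q := fun q hq ↦ Function.update_of_ne (by omega) _ _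
  have hf_nonneg : ∀ q, 0 ≤ f q := fun q ↦ by
    obtain rfl | hq := q.eq_zero_or_pos
    · exact (Function.update_self 0 0 ψ).ge
    · exact (hnonneg q hq).trans_eq (hf q hq).symm
  have hf_anti : ∀ ⦃m n⦄, 0 < m → m ≤ n → f n ≤ f m := fun m n hm hmn ↦ by
    rw [hf m hm, hf n (hm.trans_le hmn)]
    exact hanti hm (hm.trans_le hmn) hmn
  have hf_sum : Summable f := (summable_condensed_iff_of_nonneg hf_nonneg hf_anti).1 <|
    hψ.congr fun k ↦ by rw [hf _ Nat.one_le_two_pow]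
  refine (summable_congr_atTop ?_).1 hf_sum
  filter_upwards [eventually_ge_atTop 1] using hf

theorem not_summable_four_pow_mul_min (hnonneg : ∀ q, 1 ≤ q → 0 ≤ ψ q)
    (hanti : AntitoneOn ψ (Set.Ici 1)) (hdiv : ¬ Summable ψ) :
    ¬ Summable fun k : ℕ ↦ ((4⁻¹ : ℝ) ^ k)⁻¹ * min (ψ (2 ^ k) / 2 ^ k) (4⁻¹ ^ k / 2) := by
  refine fun hsum ↦ hdiv (summable_of_summable_condensed hnonneg hanti
    (summable_of_summable_min (c := 2⁻¹) (by norm_num) (hsum.congr fun k ↦ ?_)))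
  rw [mul_min_of_nonneg _ _ (by positivity)]
  congr 1
  · rw [inv_pow, inv_inv, show (4 : ℝ) = 2 * 2 by norm_num, mul_pow]
    field_simp
  · field_simp

end Divergence

section Blocks

variable {P : ℕ → Prop} [DecidablePred P]

theorem isLittleO_sum_totient_four_pow :
    (fun k : ℕ ↦ ∑ q ∈ Icc 1 k with P q, (φ q : ℝ)) =o[atTop] fun k ↦ (4 : ℝ) ^ k := by
  have hsq : (fun k : ℕ ↦ (k : ℝ) ^ 2) =o[atTop] fun k ↦ (4 : ℝ) ^ k :=
    isLittleO_pow_const_const_pow_of_one_lt 2 (by norm_num)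
  refine (IsBigO.of_bound 1 (.of_forall fun k ↦ ?_)).trans_isLittleO hsq
  rw [Real.norm_of_nonneg (by positivity), Real.norm_of_nonneg (by positivity), one_mul]
  have hsum : ∑ q ∈ Icc 1 k with P q, φ q ≤ k ^ 2 :=
    calc ∑ q ∈ Icc 1 k with P q, φ q
      _ ≤ ∑ q ∈ Icc 1 k, φ q := sum_le_sum_of_subset (filter_subset _ _)
      _ ≤ #(Icc 1 k) • k :=
        sum_le_card_nsmul _ _ _ fun q hq ↦ q.totient_le.trans (mem_Icc.1 hq).2
      _ = k ^ 2 := by rw [Nat.card_Icc, Nat.add_sub_cancel, smul_eq_mul, sq]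
  exact_mod_cast hsum

-- Removing the denominators `q ≤ k` from the `k`-th block makes every denominator occur in only
-- finitely many blocks, at a negligible cost.
theorem isBigO_four_pow_card_pointsOfOrder {T : ℝ} [Fact (0 < T)]
    (hP : (fun N : ℕ ↦ (N : ℝ) ^ 2) =O[atTop] fun N ↦ ∑ q ∈ Icc 1 N with P q, (φ q : ℝ)) :
    (fun k : ℕ ↦ (4 : ℝ) ^ k) =O[atTop]
      fun k ↦ (#(pointsOfOrder T {q ∈ Ioc k (2 ^ k) | P q}) : ℝ) := by
  have hfull : (fun k : ℕ ↦ (4 : ℝ) ^ k) =O[atTop]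
      fun k ↦ ∑ q ∈ Icc 1 (2 ^ k) with P q, (φ q : ℝ) := by
    refine (hP.comp_tendsto (tendsto_pow_atTop_atTop_of_one_lt one_lt_two)).congr_left fun k ↦ ?_
    simp only [Function.comp_apply, Nat.cast_pow, Nat.cast_ofNat]
    rw [← pow_mul, mul_comm, pow_mul]
    norm_num
  have hsmall := (isLittleO_sum_totient_four_pow (P := P)).trans_isBigO hfull
  refine hfull.trans (hsmall.right_isBigO_sub.congr_right fun k ↦ ?_)
  have hsplit : Icc 1 (2 ^ k) = Icc 1 k ∪ Ioc k (2 ^ k) :=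
    (Ioc_union_Ioc_eq_Ioc k.zero_le Nat.lt_two_pow_self.le).symm
  rw [card_pointsOfOrder, hsplit, filter_union, sum_union, Nat.cast_sum, add_sub_cancel_left]
  exact disjoint_filter_filter (Ioc_disjoint_Ioc_of_le (a := 0) le_rfl)

theorem volume_limsup_thickening_pointsOfOrder_ne_zero {ψ : ℕ → ℝ}
    (hP : (fun N : ℕ ↦ (N : ℝ) ^ 2) =O[atTop] fun N ↦ ∑ q ∈ Icc 1 N with P q, (φ q : ℝ))
    (hnonneg : ∀ q, 1 ≤ q → 0 ≤ ψ q) (hanti : AntitoneOn ψ (Set.Ici 1)) (hdiv : ¬ Summable ψ) :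
    volume (limsup (fun k : ℕ ↦ thickening (min (ψ (2 ^ k) / 2 ^ k) (4⁻¹ ^ k / 2))
      (pointsOfOrder 1 {q ∈ Ioc k (2 ^ k) | P q} : Set UnitAddCircle)) atTop) ≠ 0 := by
  refine volume_limsup_thickening_ne_zero (a := 4⁻¹) (by norm_num) (by norm_num)
    (fun k x hx y hy hxy ↦ ?_) ?_ (fun k ↦ ?_) (fun k ↦ ?_)
    (not_summable_four_pow_mul_min hnonneg hanti hdiv)
  · rw [mem_coe, mem_pointsOfOrder, mem_filter, mem_Ioc] at hx hy
    refine Eq.trans_le ?_ (div_sq_le_dist_of_addOrderOf_le hx.1 hy.1 hx.2.1.2 hy.2.1.2 hxy)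
    rw [Nat.cast_pow, ← pow_mul, mul_comm, pow_mul, inv_pow, one_div]
    norm_num
  · simpa only [inv_pow, inv_inv] using isBigO_four_pow_card_pointsOfOrder hP
  · have := hnonneg (2 ^ k) Nat.one_le_two_pow
    positivity
  · linarith [min_le_right (ψ (2 ^ k) / 2 ^ k) (4⁻¹ ^ k / 2)]

end Blocks

section WellApproximable

theorem limsup_thickening_pointsOfOrder_subset_addWellApproximable {T : ℝ} [Fact (0 < T)]
    {Q : ℕ → Finset ℕ} {r δ : ℕ → ℝ} (hQ : ∀ k, ∀ q ∈ Q k, k < q)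
    (hr : ∀ k, ∀ q ∈ Q k, r k ≤ δ q) :
    limsup (fun k ↦ thickening (r k) (pointsOfOrder T (Q k) : Set (AddCircle T))) atTop ⊆
      addWellApproximable (AddCircle T) δ := by
  intro x hx
  rw [mem_limsup_iff_frequently_mem, frequently_atTop] at hx
  rw [mem_add_wellApproximable_iff, ← Nat.cofinite_eq_atTop, cofinite.blimsup_set_eq]
  refine Set.infinite_of_forall_exists_gt fun N ↦ ?_
  obtain ⟨k, hNk, hxk⟩ := hx N
  obtain ⟨y, hy, hxy⟩ := mem_thickening_iff.1 hxk
  obtain ⟨hy₀, hyQ⟩ := mem_pointsOfOrder.1 (mem_coe.1 hy)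
  exact ⟨addOrderOf y, ⟨hy₀, mem_approx_add_orderOf_iff.2
    ⟨y, rfl, mem_ball.2 (hxy.trans_le (hr k _ hyQ))⟩⟩, hNk.trans_lt (hQ k _ hyQ)⟩

theorem tendsto_ite_div_zero {P : ℕ → Prop} [DecidablePred P] {ψ : ℕ → ℝ}
    (hnonneg : ∀ q, 1 ≤ q → 0 ≤ ψ q) (hanti : AntitoneOn ψ (Set.Ici 1)) :
    Tendsto (fun q ↦ if P q then ψ q / q else 0) atTop (𝓝 0) := by
  refine squeeze_zero_norm' ?_ (tendsto_const_div_atTop_nhds_zero_nat (ψ 1))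
  filter_upwards [eventually_ge_atTop 1] with q hq
  have h₁ := hnonneg 1 le_rfl
  have hq₀ := hnonneg q hq
  split_ifs
  · rw [Real.norm_of_nonneg (by positivity)]
    gcongr
    exact hanti Set.self_mem_Ici hq hq
  · rw [norm_zero]
    positivity

theorem ae_mem_addWellApproximable_ite_div {P : ℕ → Prop} [DecidablePred P] {ψ : ℕ → ℝ}
    (hP : (fun N : ℕ ↦ (N : ℝ) ^ 2) =O[atTop] fun N ↦ ∑ q ∈ Icc 1 N with P q, (φ q : ℝ))
    (hnonneg : ∀ q, 1 ≤ q → 0 ≤ ψ q) (hanti : AntitoneOn ψ (Set.Ici 1)) (hdiv : ¬ Summable ψ) :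
    ∀ᵐ x : UnitAddCircle,
      x ∈ addWellApproximable UnitAddCircle fun q ↦ if P q then ψ q / q else 0 := by
  refine (AddCircle.addWellApproximable_ae_empty_or_univ _
    (tendsto_ite_div_zero hnonneg hanti)).resolve_left fun hempty ↦ ?_
  refine volume_limsup_thickening_pointsOfOrder_ne_zero hP hnonneg hanti hdiv
    (measure_mono_null ?_ (measure_eq_zero_iff_ae_notMem.2 hempty))
  have hblock : ∀ k : ℕ, ∀ q ∈ {q ∈ Ioc k (2 ^ k) | P q}, k < q ∧ q ≤ 2 ^ k ∧ P q :=
    fun k q hq ↦ by rwa [mem_filter, mem_Ioc, and_assoc] at hq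
  refine limsup_thickening_pointsOfOrder_subset_addWellApproximable
    (fun k q hq ↦ (hblock k q hq).1) fun k q hq ↦ (min_le_left _ _).trans ?_
  obtain ⟨hkq, hqk, hPq⟩ := hblock k q hq
  have hq₁ : 1 ≤ q := by omega
  have hq₀ := hnonneg q hq₁
  rw [if_pos hPq]
  gcongr
  · exact hanti hq₁ Nat.one_le_two_pow hqk
  · exact_mod_cast hqk

theorem ae_real_of_ae_unitAddCircle {p : UnitAddCircle → Prop} (hp : ∀ᵐ x, p x) :
    ∀ᵐ ω : ℝ, p ω := by
  have hunit : ∀ n : ℤ, ∀ᵐ ω : ℝ ∂volume.restrict (Set.Ioc (n : ℝ) (n + 1)), p ω := fun n ↦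
    (AddCircle.measurePreserving_mk 1 (n : ℝ)).quasiMeasurePreserving.ae hp
  rw [← Measure.restrict_univ (μ := volume), ← iUnion_Ioc_intCast ℝ]
  exact (ae_restrict_iUnion_iff _ _).2 hunit

theorem exists_int_gcd_eq_one_of_norm_sub_lt {ω ε : ℝ} {m n : ℕ} (hn : 0 < n)
    (hmn : gcd m n = 1) (hω : ‖(ω : UnitAddCircle) - ↑((m : ℝ) / n)‖ < ε / n) :
    ∃ p : ℤ, Int.gcd p n = 1 ∧ |n * ω - p| < ε := by
  have hn' : (0 : ℝ) < n := by exact_mod_cast hn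
  refine ⟨m + n * round (ω - (m : ℝ) / n), ?_, ?_⟩
  · rw [Int.gcd_add_mul_left_left]
    exact hmn
  · rw [← AddCircle.coe_sub, UnitAddCircle.norm_eq, lt_div_iff₀' hn'] at hω
    calc |n * ω - ((m + n * round (ω - (m : ℝ) / n) : ℤ) : ℝ)|
      _ = |n * (ω - m / n - round (ω - (m : ℝ) / n))| := by
        push_cast
        rw [mul_sub, mul_sub, mul_div_cancel₀ _ hn'.ne', sub_sub]
      _ = n * |ω - m / n - round (ω - (m : ℝ) / n)| := by rw [abs_mul, abs_of_pos hn']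
      _ < ε := hω

end WellApproximable

theorem stmt_16_general {P : ℕ → Prop} [DecidablePred P] {ψ : ℕ → ℝ}
    (hP : (fun N : ℕ ↦ (N : ℝ) ^ 2) =O[atTop] fun N ↦ ∑ q ∈ Icc 1 N with P q, (φ q : ℝ))
    (hnonneg : ∀ q, 1 ≤ q → 0 ≤ ψ q) (hanti : AntitoneOn ψ (Set.Ici 1)) (hdiv : ¬ Summable ψ) :
    ∀ᵐ ω : ℝ, {q : ℕ | 1 ≤ q ∧ P q ∧
      ∃ p : ℤ, Int.gcd p q = 1 ∧ |q * ω - p| < ψ q}.Infinite := by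
  filter_upwards [ae_real_of_ae_unitAddCircle
    (ae_mem_addWellApproximable_ite_div hP hnonneg hanti hdiv)] with ω hω
  refine ((UnitAddCircle.mem_addWellApproximable_iff _ _).1 hω).mono ?_
  rintro q ⟨m, hmq, hcop, hclose⟩
  have hPq : P q := by
    by_contra hPq
    rw [if_neg hPq] at hclose
    exact (norm_nonneg _).not_gt hclose
  rw [if_pos hPq] at hclose
  exact ⟨by omega, hPq, exists_int_gcd_eq_one_of_norm_sub_lt (by omega) hcop hclose⟩

/-- Khinchin-type theorem with odd denominators: if `ψ` is positive, non-increasing and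
`∑ ψ(q)` diverges, then for Lebesgue a.e. `ω` there are infinitely many odd `q ≥ 1`
admitting an integer `p` coprime to `q` with `|qω - p| < ψ(q)`. -/
theorem stmt_16 (ψ : ℕ → ℝ)
    (hpos : ∀ q, 1 ≤ q → 0 < ψ q)
    (hmono : ∀ q₁ q₂, 1 ≤ q₁ → q₁ ≤ q₂ → ψ q₂ ≤ ψ q₁)
    (hdiv : Filter.Tendsto (fun N => ∑ q ∈ Finset.Icc 1 N, ψ q)
      Filter.atTop Filter.atTop) :
    ∀ᵐ ω ∂(volume : Measure ℝ),
      {q : ℕ | 1 ≤ q ∧ Odd q ∧ ∃ p : ℤ, Int.gcd p (q : ℤ) = 1 ∧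
        |(q : ℝ) * ω - (p : ℝ)| < ψ q}.Infinite :=
  stmt_16_general isBigO_sq_sum_totient_odd (fun q hq ↦ (hpos q hq).le)
    (fun q hq _ _ hle ↦ hmono q _ hq hle) (not_summable_of_tendsto_sum_Icc_atTop hdiv)
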